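/- Let s, t > 0 and let μ be an absolutely continuous probability measure on ℝⁿ that is (1/t)-uniformly log-concave. Then the convolution μ * γ_s of μ with the centered Gaussian measure of covariance s·Id is (1/(t+s))-uniformly log-concave. Equivalently: if the density of μ divided by γ_t(x) = (2πt)^{−n/2} e^{−|x|²/(2t)} is log-concave, then the density of μ * γ_s divided by γ_{t+s} is log-concave. -/

import Mathlib

open MeasureTheory Real
open scoped ENNReal RealInnerProductSpace

noncomputable section

abbrev Euc (n : ℕ) := EuclideanSpace ℝ (Fin n)

/-- A nonnegative function `g` is log-concave: `g(ax+by) ≥ g(x)^a g(y)^b`. -/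
def IsLogConcaveFun {n : ℕ} (g : Euc n → ℝ) : Prop :=
  (∀ x, 0 ≤ g x) ∧
  ∀ x y : Euc n, ∀ a b : ℝ, 0 ≤ a → 0 ≤ b → a + b = 1 →
    g x ^ a * g y ^ b ≤ g (a • x + b • y)

def IsLogConcaveMeasure {n : ℕ} (μ : Measure (Euc n)) : Prop :=
  ∃ ρ : Euc n → ℝ, Measurable ρ ∧ IsLogConcaveFun ρ ∧
    μ = volume.withDensity (fun x => ENNReal.ofReal (ρ x))

def poincareSet {n : ℕ} (μ : Measure (Euc n)) : Set ℝ :=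
  {C : ℝ | 0 ≤ C ∧ ∀ f : Euc n → ℝ, LocallyLipschitz f →
    Integrable (fun x => ‖gradient f x‖ ^ 2) μ →
    ∫ x, f x ^ 2 ∂μ - (∫ x, f x ∂μ) ^ 2 ≤ C * ∫ x, ‖gradient f x‖ ^ 2 ∂μ}

def poincareConst {n : ℕ} (μ : Measure (Euc n)) : ℝ := sInf (poincareSet μ)

def covMatrix {n : ℕ} (μ : Measure (Euc n)) : Matrix (Fin n) (Fin n) ℝ :=
  Matrix.of fun i j => ∫ x, x i * x j ∂μ - (∫ x, x i ∂μ) * (∫ x, x j ∂μ)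

def opNorm {n : ℕ} (M : Matrix (Fin n) (Fin n) ℝ) : ℝ :=
  ‖Matrix.toEuclideanCLM (𝕜 := ℝ) M‖

def IsIsotropic {n : ℕ} (μ : Measure (Euc n)) : Prop :=
  (∫ x, x ∂μ) = 0 ∧ ∀ i j, ∫ x, x i * x j ∂μ = if i = j then 1 else 0

def UniformlyLogConcave {n : ℕ} (t : ℝ) (μ : Measure (Euc n)) : Prop :=
  ∃ g : Euc n → ℝ, Measurable g ∧ IsLogConcaveFun g ∧
    μ = volume.withDensity (fun x => ENNReal.ofReal (Real.exp (-t * ‖x‖ ^ 2 / 2) * g x))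

def IsRegularPotential {n : ℕ} (ψ : Euc n → ℝ) : Prop :=
  ContDiff ℝ (⊤ : ℕ∞) ψ ∧
  (∃ ε : ℝ, 0 < ε ∧ ∀ x v : Euc n,
    ε * ‖v‖ ^ 2 ≤ iteratedFDeriv ℝ 2 ψ x ![v, v] ∧
    iteratedFDeriv ℝ 2 ψ x ![v, v] ≤ ε⁻¹ * ‖v‖ ^ 2) ∧
  (∀ m : ℕ, ∃ C : ℝ, ∃ k : ℕ, ∀ x, ‖iteratedFDeriv ℝ m ψ x‖ ≤ C * (1 + ‖x‖) ^ k)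

def IsRegularMeasure {n : ℕ} (μ : Measure (Euc n)) (ψ : Euc n → ℝ) : Prop :=
  IsRegularPotential ψ ∧ μ = volume.withDensity (fun x => ENNReal.ofReal (Real.exp (-ψ x)))

def IsTempered {n : ℕ} (ρ : Euc n → ℝ) (f : Euc n → ℝ) : Prop :=
  ContDiff ℝ (⊤ : ℕ∞) f ∧ ∀ m : ℕ, ∃ C : ℝ, 0 < C ∧ ∃ a : ℝ, 0 < a ∧ ∀ x,
    ‖iteratedFDeriv ℝ m f x‖ ≤ C / Real.sqrt (ρ x) * Real.exp (-a * ‖x‖)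

def lap {n : ℕ} (f : Euc n → ℝ) (x : Euc n) : ℝ :=
  ∑ i, iteratedFDeriv ℝ 2 f x ![EuclideanSpace.single i (1:ℝ), EuclideanSpace.single i (1:ℝ)]

def Lop {n : ℕ} (ψ u : Euc n → ℝ) (x : Euc n) : ℝ :=
  lap u x - ⟪gradient ψ x, gradient u x⟫

def gaussDensity (n : ℕ) (s : ℝ) (x : Euc n) : ℝ :=
  (2 * π * s) ^ (-(n : ℝ) / 2) * Real.exp (-‖x‖ ^ 2 / (2 * s))

def gaussMeasure (n : ℕ) (s : ℝ) : Measure (Euc n) :=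
  volume.withDensity fun x => ENNReal.ofReal (gaussDensity n s x)

def tiltZ {n : ℕ} (ρ : Euc n → ℝ) (t : ℝ) (θ : Euc n) : ℝ :=
  ∫ x, Real.exp (⟪θ, x⟫ - t * ‖x‖ ^ 2 / 2) * ρ x

def tiltDensity {n : ℕ} (ρ : Euc n → ℝ) (t : ℝ) (θ : Euc n) (x : Euc n) : ℝ :=
  Real.exp (⟪θ, x⟫ - t * ‖x‖ ^ 2 / 2) * ρ x / tiltZ ρ t θ

def tiltMeasure {n : ℕ} (ρ : Euc n → ℝ) (t : ℝ) (θ : Euc n) : Measure (Euc n) :=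
  volume.withDensity fun x => ENNReal.ofReal (tiltDensity ρ t θ x)

def varD {n : ℕ} (p : Euc n → ℝ) (f : Euc n → ℝ) : ℝ :=
  (∫ x, f x ^ 2 * p x) - (∫ x, f x * p x) ^ 2

end
/-- Convolution of measures on `ℝⁿ` (pushforward of the product under addition). -/
noncomputable def measConv {n : ℕ} (μ ν : Measure (Euc n)) : Measure (Euc n) :=
  Measure.map (fun p : Euc n × Euc n => p.1 + p.2) (μ.prod ν)

open Set in
theorem bm_compact (K L : Set ℝ) (hK : IsCompact K) (hL : IsCompact L) (hKn : K.Nonempty)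
    (hLn : L.Nonempty) (H : Set ℝ) (hH : ∀ x ∈ K, ∀ y ∈ L, x + y ∈ H) :
    volume K + volume L ≤ volume H := by
  obtain ⟨M, hM, hMu⟩ := hK.exists_isGreatest hKn
  obtain ⟨m, hm, hml⟩ := hL.exists_isLeast hLn
  have h1 : volume ((fun x => m + x) '' K) = volume K := by
    rw [image_add_left, measure_preimage_add]
  have h2 : volume ((fun x => M + x) '' L) = volume L := by
    rw [image_add_left, measure_preimage_add]
  have hcL : MeasurableSet ((fun x => M + x) '' L) :=
    (hL.image (by fun_prop)).isClosed.measurableSet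
  rw [← h1, ← h2]
  have hd : AEDisjoint volume ((fun x => m + x) '' K) ((fun x => M + x) '' L) := by
    refine measure_mono_null (t := {M + m}) ?_ (by simp)
    rintro z ⟨⟨x, hx, rfl⟩, ⟨y, hy, hxy⟩⟩
    have := hMu hx
    have := hml hy
    simp only [mem_singleton_iff] at *
    linarith
  rw [← measure_union₀ hcL.nullMeasurableSet hd]
  refine measure_mono ?_
  rintro z (⟨x, hx, rfl⟩ | ⟨y, hy, rfl⟩)
  · simpa [add_comm] using hH x hx m hm
  · exact hH M hM y hy

open Set Pointwise in
theorem bm_meas (a b : ℝ) (ha : 0 < a) (hb : 0 < b) (A B H : Set ℝ) (hA : MeasurableSet A)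
    (hB : MeasurableSet B) (hAn : A.Nonempty) (hBn : B.Nonempty)
    (hH : ∀ x ∈ A, ∀ y ∈ B, a * x + b * y ∈ H) :
    ENNReal.ofReal a * volume A + ENNReal.ofReal b * volume B ≤ volume H := by
  have key : ∀ K ⊆ A, IsCompact K → ∀ L ⊆ B, IsCompact L →
      ENNReal.ofReal a * volume K + ENNReal.ofReal b * volume L ≤ volume H := by
    intro K hKA hK L hLB hL
    obtain ⟨x0, hx0⟩ := hAn
    obtain ⟨y0, hy0⟩ := hBn
    have h := bm_compact (a • insert x0 K) (b • insert y0 L) ((hK.insert x0).smul a)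
      ((hL.insert y0).smul b) ((insert_nonempty _ _).smul_set) ((insert_nonempty _ _).smul_set) H ?_
    · rw [Measure.addHaar_smul_of_nonneg _ ha.le, Measure.addHaar_smul_of_nonneg _ hb.le] at h
      simp only [Module.finrank_self, pow_one] at h
      refine le_trans ?_ h
      gcongr <;> exact subset_insert _ _
    · rintro _ ⟨x, hx, rfl⟩ _ ⟨y, hy, rfl⟩
      exact hH x (insert_subset hx0 hKA hx) y (insert_subset hy0 hLB hy)
  rw [hA.measure_eq_iSup_isCompact, hB.measure_eq_iSup_isCompact]
  simp only [ENNReal.mul_iSup]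
  simp only [iSup_and']
  refine ENNReal.biSup_add_biSup_le' ⟨∅, empty_subset _, isCompact_empty⟩
    ⟨∅, empty_subset _, isCompact_empty⟩ ?_
  intro K hK L hL
  exact key K hK.1 hK.2 L hL.1 hL.2

theorem amgm (a b : ℝ) (ha : 0 < a) (hb : 0 < b) (hab : a + b = 1) (x y : ℝ≥0∞) :
    x ^ a * y ^ b ≤ ENNReal.ofReal a * x + ENNReal.ofReal b * y := by
  have ha' : ENNReal.ofReal a ≠ 0 := by simpa using ha
  have hb' : ENNReal.ofReal b ≠ 0 := by simpa using hb
  induction x with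
  | top => simp [ENNReal.mul_top ha']
  | coe x =>
    induction y with
    | top => simp [ENNReal.mul_top hb']
    | coe y =>
      have := NNReal.geom_mean_le_arith_mean2_weighted a.toNNReal b.toNNReal x y
        (by rw [← Real.toNNReal_add ha.le hb.le, hab]; simp)
      rw [← ENNReal.coe_rpow_of_nonneg _ ha.le, ← ENNReal.coe_rpow_of_nonneg _ hb.le]
      simp only [Real.coe_toNNReal _ ha.le, Real.coe_toNNReal _ hb.le] at this
      unfold ENNReal.ofReal
      exact_mod_cast this

theorem layer (f : ℝ → ℝ≥0∞) (hf : Measurable f) (hf1 : ∀ x, f x ≤ 1) :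
    ∫⁻ x, f x = ∫⁻ r in Set.Ioi (0:ℝ), volume {x | ENNReal.ofReal r < f x} := by
  have h := lintegral_eq_lintegral_meas_lt (volume : Measure ℝ) (f := fun x => (f x).toReal)
    (Filter.Eventually.of_forall fun x => ENNReal.toReal_nonneg) hf.ennreal_toReal.aemeasurable
  have hft : ∀ x, f x ≠ ⊤ := fun x => ((hf1 x).trans_lt (by simp)).ne
  simp only [ENNReal.ofReal_toReal (hft _)] at h
  rw [h]
  refine setLIntegral_congr_fun measurableSet_Ioi ?_
  intro r hr
  simp only [ENNReal.ofReal_lt_iff_lt_toReal (le_of_lt hr) (hft _)]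

/-- Prekopa-Leindler in dimension one, normalized. -/
theorem pl_norm (a b : ℝ) (ha : 0 < a) (hb : 0 < b) (hab : a + b = 1) (f g h : ℝ → ℝ≥0∞)
    (hf : Measurable f) (hg : Measurable g) (hh : Measurable h)
    (hf1 : ⨆ x, f x = 1) (hg1 : ⨆ x, g x = 1)
    (H : ∀ x y, f x ^ a * g y ^ b ≤ h (a * x + b * y)) :
    (∫⁻ x, f x) ^ a * (∫⁻ x, g x) ^ b ≤ ∫⁻ x, h x := by
  refine (amgm a b ha hb hab _ _).trans ?_
  have hfl : ∀ x, f x ≤ 1 := fun x => hf1 ▸ le_iSup f x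
  have hgl : ∀ x, g x ≤ 1 := fun x => hg1 ▸ le_iSup g x
  have hmin : ∫⁻ x, min (h x) 1 ≤ ∫⁻ x, h x := lintegral_mono fun x => min_le_left _ _
  refine le_trans ?_ hmin
  rw [layer f hf hfl, layer g hg hgl, layer (fun x => min (h x) 1) (hh.min measurable_const)
    (fun x => min_le_right _ _)]
  have mf : Measurable fun r : ℝ => volume {x | ENNReal.ofReal r < f x} := by
    apply Antitone.measurable
    intro r r' hr
    exact measure_mono fun x hx => lt_of_le_of_lt (ENNReal.ofReal_le_ofReal hr) hx
  rw [← lintegral_const_mul' _ _ (by simp), ← lintegral_const_mul' _ _ (by simp),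
    ← lintegral_add_left (mf.const_mul _)]
  refine setLIntegral_mono' measurableSet_Ioi ?_
  intro r hr
  have hr : 0 < r := hr
  rcases lt_or_ge r 1 with h1 | h1
  · have h1' : ENNReal.ofReal r < 1 := by simpa using h1
    refine bm_meas a b ha hb _ _ _ (measurableSet_lt measurable_const hf)
      (measurableSet_lt measurable_const hg) ?_ ?_ ?_
    · rw [← hf1] at h1'; exact lt_iSup_iff.1 h1'
    · rw [← hg1] at h1'; exact lt_iSup_iff.1 h1'
    · intro x hx y hy
      simp only [Set.mem_ofPred_eq] at hx hy ⊢
      refine lt_min (lt_of_lt_of_le ?_ (H x y)) h1'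
      calc ENNReal.ofReal r = ENNReal.ofReal r ^ a * ENNReal.ofReal r ^ b := by
            rw [← ENNReal.rpow_add _ _ (by simpa using hr) (by simp), hab, ENNReal.rpow_one]
        _ < _ := ENNReal.mul_lt_mul (ENNReal.rpow_lt_rpow hx ha) (ENNReal.rpow_lt_rpow hy hb)
  · have h1' : 1 ≤ ENNReal.ofReal r := by simpa using h1
    have e1 : {x | ENNReal.ofReal r < f x} = ∅ := by
      ext x; simpa using (hfl x).trans h1'
    have e2 : {x | ENNReal.ofReal r < g x} = ∅ := by
      ext x; simpa using (hgl x).trans h1'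
    simp [e1, e2]

/-- Bounded version. -/
theorem pl_bdd (a b : ℝ) (ha : 0 < a) (hb : 0 < b) (hab : a + b = 1) (f g h : ℝ → ℝ≥0∞)
    (hf : Measurable f) (hg : Measurable g) (hh : Measurable h)
    (hf1 : ⨆ x, f x ≠ ⊤) (hg1 : ⨆ x, g x ≠ ⊤)
    (H : ∀ x y, f x ^ a * g y ^ b ≤ h (a * x + b * y)) :
    (∫⁻ x, f x) ^ a * (∫⁻ x, g x) ^ b ≤ ∫⁻ x, h x := by
  set M := ⨆ x, f x with hM
  set N := ⨆ x, g x with hN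
  by_cases hM0 : M = 0
  · have : ∀ x, f x = 0 := fun x => le_antisymm (hM0 ▸ le_iSup f x) bot_le
    simp [this, ENNReal.zero_rpow_of_pos ha]
  by_cases hN0 : N = 0
  · have : ∀ x, g x = 0 := fun x => le_antisymm (hN0 ▸ le_iSup g x) bot_le
    simp [this, ENNReal.zero_rpow_of_pos hb]
  have hc0 : M ^ a * N ^ b ≠ 0 := by
    simp [hM0, hN0, hf1, hg1]
  have hct : M ^ a * N ^ b ≠ ⊤ := by
    refine ENNReal.mul_ne_top ?_ ?_ <;> apply ENNReal.rpow_ne_top_of_nonneg <;> first | positivity | assumption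
  have e : (M ^ a * N ^ b)⁻¹ = M⁻¹ ^ a * N⁻¹ ^ b := by
    rw [ENNReal.mul_inv, ENNReal.inv_rpow, ENNReal.inv_rpow]
    · left; simp [hM0, hf1]
    · right; simp [hN0, hg1]
  have key := pl_norm a b ha hb hab (fun x => M⁻¹ * f x) (fun x => N⁻¹ * g x)
    (fun x => (M ^ a * N ^ b)⁻¹ * h x) (hf.const_mul _) (hg.const_mul _) (hh.const_mul _)
    (by rw [← ENNReal.mul_iSup, ← hM, ENNReal.inv_mul_cancel hM0 hf1])
    (by rw [← ENNReal.mul_iSup, ← hN, ENNReal.inv_mul_cancel hN0 hg1])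
    (by
      intro x y
      rw [e, ENNReal.mul_rpow_of_nonneg _ _ ha.le, ENNReal.mul_rpow_of_nonneg _ _ hb.le, mul_mul_mul_comm]
      gcongr
      exact H x y)
  rw [lintegral_const_mul _ hf, lintegral_const_mul _ hg, lintegral_const_mul _ hh,
    ENNReal.mul_rpow_of_nonneg _ _ ha.le, ENNReal.mul_rpow_of_nonneg _ _ hb.le, mul_mul_mul_comm, ← e] at key
  exact (ENNReal.mul_le_mul_iff_right (by simpa using hct) (by simpa using hc0)).1 key

/-- The Prekopa-Leindler property of a measure space with weights `a`, `b`. -/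
def PLProp (a b : ℝ) (E : Type) [AddCommGroup E] [Module ℝ E] [MeasureSpace E] : Prop :=
  ∀ f g h : E → ℝ≥0∞, Measurable f → Measurable g → Measurable h →
    (∀ x y, f x ^ a * g y ^ b ≤ h (a • x + b • y)) →
    (∫⁻ x, f x) ^ a * (∫⁻ x, g x) ^ b ≤ ∫⁻ x, h x

theorem iSup_min_nat (x : ℝ≥0∞) : ⨆ n : ℕ, min x n = x := by
  rw [← inf_iSup_eq]
  simp [ENNReal.iSup_natCast]

theorem pl_real (a b : ℝ) (ha : 0 < a) (hb : 0 < b) (hab : a + b = 1) : PLProp a b ℝ := by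
  intro f g h hf hg hh H
  have step : ∀ n m : ℕ, (∫⁻ x, min (f x) n) ^ a * (∫⁻ x, min (g x) m) ^ b ≤ ∫⁻ x, h x := by
    intro n m
    refine pl_bdd a b ha hb hab _ _ h (hf.min measurable_const) (hg.min measurable_const) hh ?_ ?_ ?_
    · exact ((iSup_le fun x => min_le_right (f x) (n : ℝ≥0∞)).trans_lt (by simp)).ne
    · exact ((iSup_le fun x => min_le_right (g x) (m : ℝ≥0∞)).trans_lt (by simp)).ne
    · intro x y
      refine le_trans ?_ (H x y)
      gcongr <;> exact min_le_left _ _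
  have lim : ∀ f : ℝ → ℝ≥0∞, Measurable f → ∀ a : ℝ, 0 < a →
      (∫⁻ x, f x) ^ a = ⨆ n : ℕ, (∫⁻ x, min (f x) n) ^ a := by
    intro f hf a ha
    have : ∫⁻ x, f x = ⨆ n : ℕ, ∫⁻ x, min (f x) n := by
      rw [← lintegral_iSup (fun n => hf.min measurable_const)]
      · simp only [iSup_min_nat]
      · intro n m hnm x
        exact min_le_min_left _ (by exact_mod_cast hnm)
    rw [this]
    exact (ENNReal.orderIsoRpow a ha).map_iSup _
  rw [lim f hf a ha, lim g hg b hb, ENNReal.iSup_mul]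
  refine iSup_le fun n => ?_
  rw [ENNReal.mul_iSup]
  exact iSup_le fun m => step n m

theorem pl_prod (a b : ℝ) (E F : Type) [AddCommGroup E] [Module ℝ E] [MeasureSpace E]
    [AddCommGroup F] [Module ℝ F] [MeasureSpace F] [SFinite (volume : Measure E)]
    [SFinite (volume : Measure F)] (hE : PLProp a b E) (hF : PLProp a b F) :
    PLProp a b (E × F) := by
  intro f g h hf hg hh H
  rw [Measure.volume_eq_prod, lintegral_prod _ hf.aemeasurable, lintegral_prod _ hg.aemeasurable,
    lintegral_prod _ hh.aemeasurable]
  refine hE _ _ _ hf.lintegral_prod_right' hg.lintegral_prod_right' hh.lintegral_prod_right' ?_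
  intro x y
  refine hF _ _ _ (by fun_prop) (by fun_prop) (by fun_prop) ?_
  intro u v
  exact H (x, u) (y, v)

theorem pl_equiv (a b : ℝ) (E F : Type) [AddCommGroup E] [Module ℝ E] [MeasureSpace E]
    [AddCommGroup F] [Module ℝ F] [MeasureSpace F] (e : F → E) (he : MeasurePreserving e)
    (hl : ∀ x y, e (a • x + b • y) = a • e x + b • e y) (hF : PLProp a b F) : PLProp a b E := by
  intro f g h hf hg hh H
  rw [← he.lintegral_comp hf, ← he.lintegral_comp hg, ← he.lintegral_comp hh]
  refine hF _ _ _ (hf.comp he.measurable) (hg.comp he.measurable) (hh.comp he.measurable) ?_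
  intro x y
  rw [hl]
  exact H _ _

theorem pl_pi (a b : ℝ) (ha : 0 < a) (hb : 0 < b) (hab : a + b = 1) (n : ℕ) :
    PLProp a b (Fin n → ℝ) := by
  induction n with
  | zero =>
    intro f g h hf hg hh H
    rw [Measure.volume_pi_eq_dirac (0 : Fin 0 → ℝ)]
    simp only [lintegral_dirac]
    have := H 0 0
    simpa using this
  | succ n ih =>
    refine pl_equiv a b _ _ _ (volume_preserving_piFinSuccAbove (fun _ : Fin (n + 1) => ℝ) 0).symm ?_
      (pl_prod a b ℝ (Fin n → ℝ) (pl_real a b ha hb hab) ih)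
    intro x y
    ext i
    refine Fin.cases ?_ (fun j => ?_) i <;> simp [MeasurableEquiv.piFinSuccAbove]

theorem pl_euc (a b : ℝ) (ha : 0 < a) (hb : 0 < b) (hab : a + b = 1) (n : ℕ) :
    PLProp a b (Euc n) :=
  pl_equiv a b _ _ _ (PiLp.volume_preserving_toLp (Fin n)) (fun x y => rfl) (pl_pi a b ha hb hab n)

theorem quad_id {n : ℕ} (s t : ℝ) (hs : 0 < s) (ht : 0 < t) (x z : Euc n) :
    1 / (t + s) * ‖z‖ ^ 2 / 2 + (-(1 / t) * ‖x‖ ^ 2 / 2 + -‖-x + z‖ ^ 2 / (2 * s))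
      = -(1 / t + 1 / s) / 2 * ‖x - (t / (t + s)) • z‖ ^ 2 := by
  have e : -x + z = z - x := by abel
  rw [e, @norm_sub_sq_real, @norm_sub_sq_real, norm_smul, inner_smul_right, mul_pow,
    real_inner_comm x z, Real.norm_eq_abs, sq_abs]
  have : t + s ≠ 0 := by positivity
  field_simp
  ring

theorem normsq_convex {n : ℕ} (a b : ℝ) (ha : 0 ≤ a) (hb : 0 ≤ b) (hab : a + b = 1) (u v : Euc n) :
    ‖a • u + b • v‖ ^ 2 ≤ a * ‖u‖ ^ 2 + b * ‖v‖ ^ 2 := by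
  have h1 : ‖a • u + b • v‖ ≤ a * ‖u‖ + b * ‖v‖ := by
    refine (norm_add_le _ _).trans ?_
    rw [norm_smul, norm_smul, Real.norm_of_nonneg ha, Real.norm_of_nonneg hb]
  have h2 : ‖a • u + b • v‖ ^ 2 ≤ (a * ‖u‖ + b * ‖v‖) ^ 2 := by gcongr
  have hb' : b = 1 - a := by linarith
  subst hb'
  nlinarith [mul_nonneg (mul_nonneg ha hb) (sq_nonneg (‖u‖ - ‖v‖))]

/-- The kernel whose marginal is the new log-concave factor. -/
noncomputable def kern {n : ℕ} (s t : ℝ) (g : Euc n → ℝ) (z x : Euc n) : ℝ :=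
  (2 * π * s) ^ (-(n : ℝ) / 2) *
    (g x * Real.exp (-(1 / t + 1 / s) / 2 * ‖x - (t / (t + s)) • z‖ ^ 2))

theorem kern_eq {n : ℕ} (s t : ℝ) (hs : 0 < s) (ht : 0 < t) (g : Euc n → ℝ) (z x : Euc n) :
    kern s t g z x = Real.exp (1 / (t + s) * ‖z‖ ^ 2 / 2) *
      ((Real.exp (-(1 / t) * ‖x‖ ^ 2 / 2) * g x) * gaussDensity n s (-x + z)) := by
  rw [kern, gaussDensity, ← quad_id s t hs ht, Real.exp_add, Real.exp_add]
  ring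

theorem kern_logconcave {n : ℕ} (s t : ℝ) (hs : 0 < s) (ht : 0 < t) (g : Euc n → ℝ)
    (hg : IsLogConcaveFun g) (a b : ℝ) (ha : 0 < a) (hb : 0 < b) (hab : a + b = 1)
    (z w x y : Euc n) :
    kern s t g z x ^ a * kern s t g w y ^ b ≤ kern s t g (a • z + b • w) (a • x + b • y) := by
  unfold kern
  set c : ℝ := (2 * π * s) ^ (-(n : ℝ) / 2) with hc
  have hc0 : 0 < c := by positivity
  set k : ℝ := (1 / t + 1 / s) / 2 with hk
  have hk0 : 0 < k := by positivity
  have hgx := hg.1 x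
  have hgy := hg.1 y
  have e : (a • x + b • y) - (t / (t + s)) • (a • z + b • w)
      = a • (x - (t / (t + s)) • z) + b • (y - (t / (t + s)) • w) := by
    module
  rw [e, neg_div, ← hk]
  generalize x - (t / (t + s)) • z = u
  generalize y - (t / (t + s)) • w = v
  rw [Real.mul_rpow hc0.le (by positivity), Real.mul_rpow hc0.le (by positivity),
    Real.mul_rpow hgx (by positivity), Real.mul_rpow hgy (by positivity),
    ← Real.exp_mul, ← Real.exp_mul]
  have hcc : c ^ a * c ^ b = c := by rw [← Real.rpow_add hc0, hab, Real.rpow_one]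
  calc _ = (c ^ a * c ^ b) * ((g x ^ a * g y ^ b) *
        (Real.exp (-k * ‖u‖ ^ 2 * a) * Real.exp (-k * ‖v‖ ^ 2 * b))) := by ring
    _ ≤ c * (g (a • x + b • y) * Real.exp (-k * ‖a • u + b • v‖ ^ 2)) := by
        rw [hcc, ← Real.exp_add]
        have := normsq_convex a b ha.le hb.le hab u v
        gcongr
        · exact hg.1 _
        · exact hg.2 x y a b ha.le hb.le hab
        · nlinarith

/-- If `μ` is `(1/t)`-uniformly log-concave, then `μ * γ_s` is
`(1/(t+s))`-uniformly log-concave. -/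
theorem conv_uniformly_logConcave {n : ℕ} (s t : ℝ) (hs : 0 < s) (ht : 0 < t)
    (μ : Measure (Euc n)) [IsProbabilityMeasure μ] (hac : μ ≪ volume)
    (h : UniformlyLogConcave (1 / t) μ) :
    UniformlyLogConcave (1 / (t + s)) (measConv μ (gaussMeasure n s)) := by
  obtain ⟨g, hgm, hg, hμ⟩ := h
  have hg0 := hg.1
  have hKc : Measurable (gaussDensity n s) := by unfold gaussDensity; fun_prop
  set F : Euc n → ℝ≥0∞ := fun x => ENNReal.ofReal (Real.exp (-(1 / t) * ‖x‖ ^ 2 / 2) * g x) with hF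
  set K : Euc n → ℝ≥0∞ := fun x => ENNReal.ofReal (gaussDensity n s x) with hK
  have hFm : Measurable F := by fun_prop
  have hKm : Measurable K := by fun_prop
  have hconv : measConv μ (gaussMeasure n s) = volume.withDensity (lconvolution F K volume) := by
    rw [hμ]
    exact conv_withDensity_eq_lconvolution hFm hKm
  have hDm : Measurable (lconvolution F K volume) := by fun_prop
  have hDt : ∀ z, lconvolution F K volume z ≠ ⊤ := by
    intro z
    have h1 : ∫⁻ x, F x = 1 := by
      have := measure_univ (μ := μ)
      rw [hμ, withDensity_apply _ MeasurableSet.univ, Measure.restrict_univ] at this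
      exact this
    have h2 : lconvolution F K volume z
        ≤ ∫⁻ x, F x * ENNReal.ofReal ((2 * π * s) ^ (-(n : ℝ) / 2)) := by
      rw [lconvolution_def]
      refine lintegral_mono fun x => ?_
      simp only [hK]
      gcongr
      unfold gaussDensity
      refine mul_le_of_le_one_right (by positivity) (Real.exp_le_one_iff.2 ?_)
      exact div_nonpos_of_nonpos_of_nonneg (by simp) (by positivity)
    rw [lintegral_mul_const _ hFm, h1, one_mul] at h2
    exact (h2.trans_lt ENNReal.ofReal_lt_top).ne
  have hker : ∀ z, ∫⁻ x, ENNReal.ofReal (kern s t g z x) = ENNReal.ofReal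
      (Real.exp (1 / (t + s) * ‖z‖ ^ 2 / 2) * (lconvolution F K volume z).toReal) := by
    intro z
    rw [ENNReal.ofReal_mul (by positivity), ENNReal.ofReal_toReal (hDt z), lconvolution_def,
      ← lintegral_const_mul' _ _ (by simp)]
    refine lintegral_congr fun x => ?_
    have := hg0 x
    rw [kern_eq s t hs ht, ENNReal.ofReal_mul (by positivity), ENNReal.ofReal_mul (by positivity)]
  have hkm : ∀ z, Measurable fun x => ENNReal.ofReal (kern s t g z x) := by
    intro z; unfold kern; fun_prop
  have hk0 : ∀ z x, 0 ≤ kern s t g z x := by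
    intro z x; have := hg0 x; unfold kern; positivity
  refine ⟨fun z => Real.exp (1 / (t + s) * ‖z‖ ^ 2 / 2) * (lconvolution F K volume z).toReal,
    ?_, ⟨fun z => by positivity, ?_⟩, ?_⟩
  · exact Measurable.mul (by fun_prop) hDm.ennreal_toReal
  · intro z w a b ha hb hab
    rcases ha.eq_or_lt with rfl | ha
    · obtain rfl : b = 1 := by linarith
      simp
    rcases hb.eq_or_lt with rfl | hb
    · obtain rfl : a = 1 := by linarith
      simp
    have key := pl_euc a b ha hb hab n _ _ _ (hkm z) (hkm w) (hkm (a • z + b • w)) (by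
      intro x y
      rw [ENNReal.ofReal_rpow_of_nonneg (hk0 _ _) ha.le,
        ENNReal.ofReal_rpow_of_nonneg (hk0 _ _) hb.le,
        ← ENNReal.ofReal_mul (Real.rpow_nonneg (hk0 _ _) _)]
      exact ENNReal.ofReal_le_ofReal (kern_logconcave s t hs ht g hg a b ha hb hab z w x y))
    rw [hker, hker, hker, ENNReal.ofReal_rpow_of_nonneg (by positivity) ha.le,
        ENNReal.ofReal_rpow_of_nonneg (by positivity) hb.le,
        ← ENNReal.ofReal_mul (by positivity)] at key
    exact (ENNReal.ofReal_le_ofReal_iff (by positivity)).1 key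
  · rw [hconv]
    congr 1
    ext z
    rw [← mul_assoc, ← Real.exp_add]
    have : -(1 / (t + s)) * ‖z‖ ^ 2 / 2 + 1 / (t + s) * ‖z‖ ^ 2 / 2 = 0 := by ring
    rw [this, Real.exp_zero, one_mul, ENNReal.ofReal_toReal (hDt z)]
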